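/- arXiv:math/0009018 — 2 statements merged into one kernel-verified Lean document; each statement's English description precedes it below -/
import Mathlib

section
/- If there is a strictly decreasing sequence D_n ∈ (0, D_max) with D_n → 0 such that the degeneracy condition holds at every D_n, then P is the uniform distribution on A and ρ is a permutation distortion measure. -/
open Real Finset

/-- `Q` is a probability mass function on `Fin k`. -/
def IsPmf {k : ℕ} (Q : Fin k → ℝ) : Prop := (∀ j, 0 ≤ Q j) ∧ ∑ j, Q j = 1

/-- `Λ_{P,Q}(λ) = Σ_i P_i · ln (Σ_j Q_j e^{λ ρ_ij})`. -/
noncomputable def Lam {k : ℕ} (P : Fin k → ℝ) (ρ : Fin k → Fin k → ℝ)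
    (Q : Fin k → ℝ) (l : ℝ) : ℝ :=
  ∑ i, P i * Real.log (∑ j, Q j * Real.exp (l * ρ i j))

/-- The cost `Σ_{i,j} P_i W_ij log₂ (W_ij / Q_j)` of a transition matrix `W`, with the
conventions `0 · log 0 = 0` (automatic in Lean since `Real.log 0 = 0`) and value `⊤`
if `W i j > 0` for some `j` with `Q j = 0`. -/
noncomputable def wCost {k : ℕ} (P Q : Fin k → ℝ) (W : Fin k → Fin k → ℝ) : EReal :=
  if ∀ i j, 0 < W i j → 0 < Q j then
    (((∑ i, ∑ j, P i * W i j * Real.logb 2 (W i j / Q j)) : ℝ) : EReal)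
  else ⊤

/-- `R(P,Q,D)`: infimum over row-stochastic matrices `W` with
`Σ_{i,j} P_i W_ij ρ_ij ≤ D` of the relative-entropy cost. -/
noncomputable def RPQ {k : ℕ} (P : Fin k → ℝ) (ρ : Fin k → Fin k → ℝ)
    (Q : Fin k → ℝ) (D : ℝ) : EReal :=
  ⨅ W ∈ {W : Fin k → Fin k → ℝ | (∀ i j, 0 ≤ W i j) ∧ (∀ i, ∑ j, W i j = 1) ∧
      ∑ i, ∑ j, P i * W i j * ρ i j ≤ D}, wCost P Q W

/-- The rate-distortion function `R(D) = inf_Q R(P,Q,D)`. -/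
noncomputable def RofD {k : ℕ} (P : Fin k → ℝ) (ρ : Fin k → Fin k → ℝ) (D : ℝ) : EReal :=
  ⨅ Q ∈ {Q : Fin k → ℝ | IsPmf Q}, RPQ P ρ Q D

/-- `D_max = min_j Σ_i P_i ρ_ij`. -/
noncomputable def Dmax {k : ℕ} (P : Fin k → ℝ) (ρ : Fin k → Fin k → ℝ) : ℝ :=
  sInf (Set.range fun j => ∑ i, P i * ρ i j)

/-- `ρ` is a permutation distortion measure: all rows of `(ρ_ij)` are permutations
of one another. -/
def IsPermMeasure {k : ℕ} (ρ : Fin k → Fin k → ℝ) : Prop :=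
  ∀ i i' : Fin k, ∃ σ : Equiv.Perm (Fin k), ∀ j, ρ i' j = ρ i (σ j)

/-- The degeneracy condition at distortion level `D`: there are a pmf `Q*` achieving
`R(P,Q*,D) = R(D)` and `λ* < 0` with `Λ'_{P,Q*}(λ*) = D`,
`λ*·D − Λ_{P,Q*}(λ*) = (ln 2)·R(D)`, and `Σ_j Q*_j e^{λ* ρ_ij}` independent of `i`. -/
def DegenAt {k : ℕ} (P : Fin k → ℝ) (ρ : Fin k → Fin k → ℝ) (D : ℝ) : Prop :=
  ∃ Q : Fin k → ℝ, IsPmf Q ∧ RPQ P ρ Q D = RofD P ρ D ∧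
    ∃ l : ℝ, l < 0 ∧ HasDerivAt (Lam P ρ Q) D l ∧
      ((l * D - Lam P ρ Q l : ℝ) : EReal) = (Real.log 2 : EReal) * RofD P ρ D ∧
      ∃ c : ℝ, ∀ i, ∑ j, Q j * Real.exp (l * ρ i j) = c

lemma dirichlet_zero (u : ℕ → ℝ) (hu : Filter.Tendsto u Filter.atTop Filter.atBot)
    (a : ℝ → ℝ) (S : Finset ℝ)
    (h : ∀ᶠ n in Filter.atTop, ∑ r ∈ S, a r * Real.exp (u n * r) = 0) :
    ∀ r ∈ S, a r = 0 := by
  induction S using Finset.induction_on_min with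
  | empty => simp
  | insert r0 s hlt ih =>
    have hnot : r0 ∉ s := fun hh => lt_irrefl _ (hlt r0 hh)
    have h2 : ∀ᶠ n in Filter.atTop,
        a r0 + ∑ r ∈ s, a r * Real.exp (u n * (r - r0)) = 0 := by
      filter_upwards [h] with n hn
      rw [Finset.sum_insert hnot] at hn
      have : a r0 + ∑ r ∈ s, a r * Real.exp (u n * (r - r0))
          = Real.exp (-(u n * r0)) * (a r0 * Real.exp (u n * r0)
            + ∑ r ∈ s, a r * Real.exp (u n * r)) := by
        rw [mul_add, Finset.mul_sum]
        congr 1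
        · rw [mul_left_comm, ← Real.exp_add]; simp
        · refine Finset.sum_congr rfl fun r _ => ?_
          rw [mul_left_comm, ← Real.exp_add]
          congr 2; ring
      rw [this, hn, mul_zero]
    have h3 : Filter.Tendsto (fun n => a r0 + ∑ r ∈ s, a r * Real.exp (u n * (r - r0)))
        Filter.atTop (nhds (a r0 + ∑ r ∈ s, a r * 0)) := by
      refine tendsto_const_nhds.add (tendsto_finset_sum _ fun r hr => ?_)
      refine tendsto_const_nhds.mul (Real.tendsto_exp_atBot.comp ?_)
      exact hu.atBot_mul_const (sub_pos.2 (hlt r hr))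
    have h0 : a r0 = 0 := by
      have h4 := tendsto_nhds_unique (h3.congr' h2) tendsto_const_nhds
      simpa using h4
    intro r hr
    rcases Finset.mem_insert.1 hr with rfl | hr
    · exact h0
    · refine ih ?_ r hr
      filter_upwards [h] with n hn
      rw [Finset.sum_insert hnot, h0] at hn
      simpa using hn

lemma degen_unpack {k : ℕ} (P : Fin k → ℝ) (ρ : Fin k → Fin k → ℝ)
    (hP : IsPmf P) (hPpos : ∀ i, 0 < P i) (hρnn : ∀ i j, 0 ≤ ρ i j) (D : ℝ)
    (h : DegenAt P ρ D) :
    ∃ (Q : Fin k → ℝ) (l c : ℝ) (W : Fin k → Fin k → ℝ), IsPmf Q ∧ l < 0 ∧ 0 < c ∧ c ≤ 1 ∧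
      (∀ i, ∑ j, Q j * Real.exp (l * ρ i j) = c) ∧
      (∀ i j, W i j = Q j * Real.exp (l * ρ i j) / c) ∧
      ∑ i, ∑ j, P i * W i j * ρ i j = D ∧
      l * D - Real.log c ≤
        ∑ i, ∑ j, P i * W i j * Real.log (W i j / ∑ i', P i' * W i' j) := by
  obtain ⟨Q, hQ, -, l, hl, hder, hval, c, hc⟩ := h
  have hne : Nonempty (Fin k) := by
    by_contra hh
    rw [not_nonempty_iff] at hh
    have := hP.2
    simp at this
  obtain ⟨i0⟩ := hne
  have hterm : ∀ i j, 0 ≤ Q j * Real.exp (l * ρ i j) :=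
    fun i j => mul_nonneg (hQ.1 j) (Real.exp_pos _).le
  have hcpos : 0 < c := by
    rw [← hc i0]
    have hex : ∃ j, 0 < Q j := by
      by_contra hh
      push Not at hh
      have : ∑ j, Q j ≤ 0 := Finset.sum_nonpos fun j _ => hh j
      linarith [hQ.2]
    obtain ⟨j, hj⟩ := hex
    exact Finset.sum_pos' (fun j _ => hterm i0 j)
      ⟨j, Finset.mem_univ _, mul_pos hj (Real.exp_pos _)⟩
  have hc1 : c ≤ 1 := by
    rw [← hc i0, ← hQ.2]
    refine Finset.sum_le_sum fun j _ => ?_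
    have : Real.exp (l * ρ i0 j) ≤ 1 :=
      Real.exp_le_one_iff.2 (mul_nonpos_of_nonpos_of_nonneg hl.le (hρnn _ _))
    nlinarith [hQ.1 j]
  set W : Fin k → Fin k → ℝ := fun i j => Q j * Real.exp (l * ρ i j) / c with hW
  have hWnn : ∀ i j, 0 ≤ W i j := fun i j => div_nonneg (hterm i j) hcpos.le
  have hWsum : ∀ i, ∑ j, W i j = 1 := by
    intro i
    simp only [hW]
    rw [← Finset.sum_div, hc i, div_self hcpos.ne']
  have hD : ∑ i, ∑ j, P i * W i j * ρ i j = D := by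
    have hd : HasDerivAt (Lam P ρ Q)
        (∑ i, P i * ((∑ j, Q j * (Real.exp (l * ρ i j) * (1 * ρ i j))) /
          (∑ j, Q j * Real.exp (l * ρ i j)))) l := by
      unfold Lam
      refine HasDerivAt.fun_sum fun i _ => HasDerivAt.const_mul _ (HasDerivAt.log ?_ ?_)
      · refine HasDerivAt.fun_sum fun j _ => HasDerivAt.const_mul _ (HasDerivAt.exp ?_)
        exact (hasDerivAt_id' l).mul_const _
      · rw [hc i]; exact hcpos.ne'
    rw [← hd.unique hder]
    refine Finset.sum_congr rfl fun i _ => ?_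
    rw [hc i, Finset.sum_div, Finset.mul_sum]
    refine Finset.sum_congr rfl fun j _ => ?_
    simp only [hW]; ring
  have hLam : Lam P ρ Q l = Real.log c := by
    unfold Lam
    simp only [hc]
    rw [← Finset.sum_mul, hP.2, one_mul]
  refine ⟨Q, l, c, W, hQ, hl, hcpos, hc1, hc, fun i j => rfl, hD, ?_⟩
  set Q' : Fin k → ℝ := fun j => ∑ i', P i' * W i' j with hQ'
  have hQ'pmf : IsPmf Q' := by
    refine ⟨fun j => Finset.sum_nonneg fun i _ => mul_nonneg (hPpos i).le (hWnn i j), ?_⟩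
    simp only [hQ']
    rw [Finset.sum_comm]
    simp only [← Finset.mul_sum, hWsum, mul_one, hP.2]
  have hle : RofD P ρ D ≤
      ((∑ i, ∑ j, P i * W i j * Real.logb 2 (W i j / Q' j) : ℝ) : EReal) := by
    unfold RofD
    refine (iInf₂_le Q' hQ'pmf).trans ?_
    unfold RPQ
    refine (iInf₂_le W ⟨hWnn, hWsum, hD.le⟩).trans ?_
    unfold wCost
    rw [if_pos]
    intro i j hij
    exact Finset.sum_pos' (fun i _ => mul_nonneg (hPpos i).le (hWnn i j))
      ⟨i, Finset.mem_univ _, mul_pos (hPpos i) hij⟩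
  have hlog2 : 0 < Real.log 2 := Real.log_pos (by norm_num)
  have h5 : (Real.log 2 : EReal) * RofD P ρ D ≤ (Real.log 2 : EReal) *
      ((∑ i, ∑ j, P i * W i j * Real.logb 2 (W i j / Q' j) : ℝ) : EReal) :=
    mul_le_mul_of_nonneg_left hle (by exact_mod_cast hlog2.le)
  rw [← hval, ← EReal.coe_mul, EReal.coe_le_coe_iff, hLam] at h5
  refine h5.trans (le_of_eq ?_)
  simp only [Finset.mul_sum]
  refine Finset.sum_congr rfl fun i _ => Finset.sum_congr rfl fun j _ => ?_
  simp only [Real.logb]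
  field_simp
  rfl

lemma kl_eq {k : ℕ} (Q Q' : Fin k → ℝ) (hQ : ∀ j, 0 < Q j) (hQ' : ∀ j, 0 < Q' j)
    (hs : ∑ j, Q j = ∑ j, Q' j)
    (h : 0 ≤ ∑ j, Q' j * Real.log (Q j / Q' j)) : ∀ j, Q' j = Q j := by
  have hle : ∀ j, Q' j * Real.log (Q j / Q' j) ≤ Q j - Q' j := by
    intro j
    have := Real.log_le_sub_one_of_pos (div_pos (hQ j) (hQ' j))
    calc _ ≤ Q' j * (Q j / Q' j - 1) := mul_le_mul_of_nonneg_left this (hQ' j).le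
      _ = _ := by have := (hQ' j).ne'; field_simp
  have hsum : ∑ j, (Q j - Q' j - Q' j * Real.log (Q j / Q' j)) = 0 := by
    apply le_antisymm
    · rw [Finset.sum_sub_distrib, Finset.sum_sub_distrib]; linarith
    · exact Finset.sum_nonneg fun j _ => sub_nonneg.2 (hle j)
  intro j
  have hj := (Finset.sum_eq_zero_iff_of_nonneg (fun j _ => sub_nonneg.2 (hle j))).1 hsum j
    (Finset.mem_univ _)
  by_contra hne
  have hne1 : Q j / Q' j ≠ 1 := by
    intro hh
    rw [div_eq_one_iff_eq (hQ' j).ne'] at hh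
    exact hne hh.symm
  have := Real.log_lt_sub_one_of_pos (div_pos (hQ j) (hQ' j)) hne1
  have h2 := mul_lt_mul_of_pos_left this (hQ' j)
  have h3 : Q' j * (Q j / Q' j - 1) = Q j - Q' j := by
    have := (hQ' j).ne'; field_simp
  linarith

lemma degen_small {k : ℕ} (P : Fin k → ℝ) (ρ : Fin k → Fin k → ℝ)
    (hP : IsPmf P) (hPpos : ∀ i, 0 < P i) (hρnn : ∀ i j, 0 ≤ ρ i j)
    (hρsym : ∀ i j, ρ i j = ρ j i) (hρzero : ∀ i j, ρ i j = 0 ↔ i = j)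
    (m : ℝ) (hm : 0 < m) (hmle : ∀ i j, i ≠ j → m ≤ ρ i j) (D : ℝ)
    (hDs : ∀ i, D < P i * m / 2) (h : DegenAt P ρ D) :
    ∃ (Q : Fin k → ℝ) (l c : ℝ), l < 0 ∧
      (∀ i, ∑ j, Q j * Real.exp (l * ρ i j) = c) ∧
      (∀ i, ∑ j, P j * Real.exp (l * ρ i j) = c) ∧
      (∀ i j, i ≠ j → P i * P j * m / 2 * Real.exp (l * ρ i j) ≤ D) := by
  obtain ⟨Q, l, c, W, hQ, hl, hc, hc1, hrow, hW, hD, hineq⟩ :=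
    degen_unpack P ρ hP hPpos hρnn D h
  have hWnn : ∀ i j, 0 ≤ W i j := fun i j => by
    rw [hW]; exact div_nonneg (mul_nonneg (hQ.1 j) (Real.exp_pos _).le) hc.le
  have hWsum : ∀ i, ∑ j, W i j = 1 := by
    intro i
    simp only [hW]
    rw [← Finset.sum_div, hrow i, div_self hc.ne']
  have ht : ∀ i j, 0 ≤ P i * W i j * ρ i j := fun i j =>
    mul_nonneg (mul_nonneg (hPpos i).le (hWnn i j)) (hρnn i j)
  have hrowD : ∀ i, ∑ j, P i * W i j * ρ i j ≤ D := by
    intro i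
    rw [← hD]
    exact Finset.single_le_sum (f := fun i => ∑ j, P i * W i j * ρ i j)
      (fun i _ => Finset.sum_nonneg fun j _ => ht i j) (Finset.mem_univ i)
  have hdiag : ∀ i, 1 / 2 < W i i := by
    intro i
    have h1 : P i * m * (1 - W i i) ≤ ∑ j, P i * W i j * ρ i j := by
      rw [← hWsum i, ← Finset.sum_erase_eq_sub (Finset.mem_univ i), Finset.mul_sum]
      refine (Finset.sum_le_sum (g := fun j => P i * W i j * ρ i j) fun j hj => ?_).trans
        (Finset.sum_le_sum_of_subset_of_nonneg (Finset.erase_subset i _)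
          fun j _ _ => ht i j)
      have := mul_le_mul_of_nonneg_left (hmle i j (Finset.ne_of_mem_erase hj).symm)
        (mul_nonneg (hPpos i).le (hWnn i j))
      linarith
    have h2 := hDs i
    have h3 := hrowD i
    have h4 : 0 < P i * m := mul_pos (hPpos i) hm
    by_contra hh
    push Not at hh
    nlinarith
  have hQpos : ∀ j, 0 < Q j := by
    intro j
    refine lt_of_le_of_ne (hQ.1 j) fun hh => ?_
    have := hdiag j
    rw [hW, ← hh] at this
    norm_num at this
  set Q' : Fin k → ℝ := fun j => ∑ i', P i' * W i' j with hQ'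
  have hQ'ge : ∀ j, P j / 2 ≤ Q' j := by
    intro j
    have h1 : P j * W j j ≤ Q' j :=
      Finset.single_le_sum (f := fun i => P i * W i j)
        (fun i _ => mul_nonneg (hPpos i).le (hWnn i j)) (Finset.mem_univ j)
    nlinarith [hdiag j, hPpos j]
  have hQ'pos : ∀ j, 0 < Q' j := fun j => by linarith [hQ'ge j, hPpos j]
  have hQ'sum : ∑ j, Q' j = 1 := by
    simp only [hQ']
    rw [Finset.sum_comm]
    simp only [← Finset.mul_sum, hWsum, mul_one, hP.2]
  have heq : ∀ j, Q' j = Q j := by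
    refine kl_eq Q Q' hQpos hQ'pos (by rw [hQ.2, hQ'sum]) ?_
    have h1 : ∑ i, ∑ j, P i * W i j * Real.log (W i j / Q' j)
        = (l * D - Real.log c) + ∑ j, Q' j * Real.log (Q j / Q' j) := by
      have e1 : ∀ i j, P i * W i j * Real.log (W i j / Q' j)
          = l * (P i * W i j * ρ i j) - Real.log c * (P i * W i j)
            + P i * W i j * Real.log (Q j / Q' j) := by
        intro i j
        have : Real.log (W i j / Q' j) = l * ρ i j - Real.log c + Real.log (Q j / Q' j) := by
          rw [hW, Real.log_div (by have := hQpos j; positivity) (hQ'pos j).ne',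
            Real.log_div (by have := hQpos j; positivity) hc.ne',
            Real.log_mul (hQpos j).ne' (Real.exp_pos _).ne', Real.log_exp,
            Real.log_div (hQpos j).ne' (hQ'pos j).ne']
          ring
        rw [this]; ring
      simp only [e1, Finset.sum_add_distrib, Finset.sum_sub_distrib, ← Finset.mul_sum]
      rw [hD]
      simp only [hWsum, mul_one, hP.2]
      congr 1
      rw [Finset.sum_comm]
      refine Finset.sum_congr rfl fun j _ => ?_
      rw [← Finset.sum_mul]
    rw [h1] at hineq
    linarith
  have hcol : ∀ j, ∑ i, P i * Real.exp (l * ρ j i) = c := by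
    intro j
    have h1 := heq j
    simp only [hQ', hW] at h1
    have h2 : ∑ i, P i * (Q j * Real.exp (l * ρ i j) / c)
        = Q j / c * ∑ i, P i * Real.exp (l * ρ j i) := by
      rw [Finset.mul_sum]
      refine Finset.sum_congr rfl fun i _ => ?_
      rw [hρsym j i]; ring
    rw [h2] at h1
    have h3 := hQpos j
    field_simp at h1
    linarith
  refine ⟨Q, l, c, hl, hrow, hcol, ?_⟩
  intro i j hij
  have h1 : P i * W i j * ρ i j ≤ D :=
    (Finset.single_le_sum (f := fun j => P i * W i j * ρ i j) (fun j _ => ht i j)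
      (Finset.mem_univ j)).trans (hrowD i)
  refine le_trans ?_ h1
  have h2 : P j / 2 * Real.exp (l * ρ i j) ≤ W i j := by
    rw [hW, le_div_iff₀ hc]
    have := hQ'ge j
    rw [heq] at this
    have he := Real.exp_pos (l * ρ i j)
    have h0 : 0 ≤ P j / 2 * Real.exp (l * ρ i j) := by have := hPpos j; positivity
    nlinarith
  calc _ = P i * (P j / 2 * Real.exp (l * ρ i j)) * m := by ring
    _ ≤ P i * W i j * ρ i j := by
      have := hPpos i
      have := hWnn i j
      have := hmle i j hij
      gcongr

/-- **Theorem 1(b).** If the degeneracy condition holds along a strictly decreasing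
sequence `D_n ∈ (0, D_max)` with `D_n → 0`, then `P` is uniform and `ρ` is a
permutation distortion measure. -/
theorem stmt_1 {k : ℕ} (hk : 2 ≤ k)
    (P : Fin k → ℝ) (ρ : Fin k → Fin k → ℝ)
    (hP : IsPmf P) (hPpos : ∀ i, 0 < P i)
    (hρnn : ∀ i j, 0 ≤ ρ i j) (hρsym : ∀ i j, ρ i j = ρ j i)
    (hρzero : ∀ i j, ρ i j = 0 ↔ i = j)
    (hDmax : 0 < Dmax P ρ)
    (Dseq : ℕ → ℝ) (hanti : StrictAnti Dseq)
    (hmem : ∀ n, Dseq n ∈ Set.Ioo 0 (Dmax P ρ))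
    (hlim : Filter.Tendsto Dseq Filter.atTop (nhds 0))
    (hdeg : ∀ n, DegenAt P ρ (Dseq n)) :
    (∀ i, P i = 1 / (k : ℝ)) ∧ IsPermMeasure ρ := by
  have hmin : ∃ m : ℝ, 0 < m ∧ ∀ i j, i ≠ j → m ≤ ρ i j := by
    let S : Finset (Fin k × Fin k) := Finset.univ.filter fun p => p.1 ≠ p.2
    have hS : S.Nonempty := ⟨(⟨0, by omega⟩, ⟨1, by omega⟩), by simp [S]⟩
    obtain ⟨p, hp, hpm⟩ := S.exists_min_image (fun p => ρ p.1 p.2) hS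
    refine ⟨ρ p.1 p.2, ?_, fun i j hij => hpm (i, j) (by simp [S, hij])⟩
    refine lt_of_le_of_ne (hρnn _ _) fun hh => ?_
    have h1 := (hρzero _ _).1 hh.symm
    simp [S] at hp
    exact hp h1
  obtain ⟨m, hm, hmle⟩ := hmin
  have hsmall : ∀ᶠ n in Filter.atTop, ∀ i, Dseq n < P i * m / 2 := by
    rw [Filter.eventually_all]
    intro i
    exact hlim.eventually_lt_const (by have := hPpos i; positivity)
  obtain ⟨N, hN⟩ := Filter.eventually_atTop.1 hsmall
  have hall : ∀ n, ∃ (Q : Fin k → ℝ) (l c : ℝ), l < 0 ∧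
      (∀ i, ∑ j, Q j * Real.exp (l * ρ i j) = c) ∧
      (∀ i, ∑ j, P j * Real.exp (l * ρ i j) = c) ∧
      (∀ i j, i ≠ j → P i * P j * m / 2 * Real.exp (l * ρ i j) ≤ Dseq (n + N)) := fun n =>
    degen_small P ρ hP hPpos hρnn hρsym hρzero m hm hmle _ (hN (n + N) (by omega)) (hdeg _)
  choose Q l c hl hQ hPc hexp using hall
  have hlimN : Filter.Tendsto (fun n => Dseq (n + N)) Filter.atTop (nhds 0) :=
    (Filter.tendsto_add_atTop_iff_nat N).2 hlim
  have hltend : Filter.Tendsto l Filter.atTop Filter.atBot := by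
    let i : Fin k := ⟨0, by omega⟩
    let j : Fin k := ⟨1, by omega⟩
    have hij : i ≠ j := by simp [i, j]
    have hpos : 0 < P i * P j * m / 2 := by
      have := hPpos i; have := hPpos j; positivity
    have hρp : 0 < ρ i j := lt_of_lt_of_le hm (hmle i j hij)
    have h1 : Filter.Tendsto (fun n => Real.exp (l n * ρ i j)) Filter.atTop (nhds 0) := by
      have h2 := hlimN.div_const (P i * P j * m / 2)
      rw [zero_div] at h2
      refine squeeze_zero (fun n => (Real.exp_pos _).le) (fun n => ?_) h2
      rw [le_div_iff₀ hpos, mul_comm]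
      exact hexp n i j hij
    rw [Real.tendsto_exp_comp_nhds_zero] at h1
    have h3 := h1.atBot_mul_const (inv_pos.2 hρp)
    refine h3.congr fun n => ?_
    field_simp
  -- coefficients agree
  have hcoef : ∀ (i i' : Fin k) (r : ℝ),
      (∑ j with ρ i j = r, P j) = ∑ j with ρ i' j = r, P j := by
    intro i i' r
    let S : Finset ℝ := Finset.univ.image (ρ i) ∪ Finset.univ.image (ρ i')
    have hd := dirichlet_zero l hltend
      (fun r => (∑ j with ρ i j = r, P j) - ∑ j with ρ i' j = r, P j) S ?_
    · by_cases hr : r ∈ S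
      · exact sub_eq_zero.1 (hd r hr)
      · rw [Finset.filter_eq_empty_iff.2, Finset.filter_eq_empty_iff.2]
        · intro j _ hj
          exact hr (Finset.mem_union_right _ (hj ▸ Finset.mem_image_of_mem _ (Finset.mem_univ j)))
        · intro j _ hj
          exact hr (Finset.mem_union_left _ (hj ▸ Finset.mem_image_of_mem _ (Finset.mem_univ j)))
    · refine Filter.Eventually.of_forall fun n => ?_
      have key : ∀ i0 : Fin k, (∀ j, ρ i0 j ∈ S) →
          ∑ r ∈ S, (∑ j with ρ i0 j = r, P j) * Real.exp (l n * r) = c n := by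
        intro i0 hi0
        rw [← hPc n i0, ← Finset.sum_fiberwise_of_maps_to (s := Finset.univ) (t := S)
          (g := ρ i0) (fun j _ => hi0 j)]
        refine Finset.sum_congr rfl fun r _ => ?_
        rw [Finset.sum_mul]
        refine Finset.sum_congr rfl fun j hj => ?_
        rw [(Finset.mem_filter.1 hj).2]
      simp only [sub_mul, Finset.sum_sub_distrib]
      rw [key i, key i', sub_self]
      · intro j
        exact Finset.mem_union_right _ (Finset.mem_image_of_mem _ (Finset.mem_univ j))
      · intro j
        exact Finset.mem_union_left _ (Finset.mem_image_of_mem _ (Finset.mem_univ j))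
  have hPeq : ∀ i i', P i = P i' := by
    intro i i'
    have h1 := hcoef i i' 0
    have h2 : ∀ i : Fin k, (∑ j with ρ i j = 0, P j) = P i := by
      intro i
      simp only [hρzero]
      rw [Finset.filter_eq]
      simp
    rwa [h2, h2] at h1
  have hk0 : (0 : ℝ) < k := by exact_mod_cast (by omega : 0 < k)
  have hunif : ∀ i, P i = 1 / (k : ℝ) := by
    intro i
    have h1 := hP.2
    rw [Finset.sum_congr rfl (fun j _ => hPeq j i)] at h1
    simp at h1
    field_simp
    linarith
  refine ⟨hunif, fun i i' => ?_⟩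
  have hcard : ∀ r, Fintype.card {j // ρ i' j = r} = Fintype.card {j // ρ i j = r} := by
    intro r
    have h1 := hcoef i' i r
    simp only [hunif, Finset.sum_const, nsmul_eq_mul] at h1
    have h2 : (1 / (k : ℝ)) ≠ 0 := by positivity
    have h3 := mul_right_cancel₀ h2 h1
    rw [Fintype.card_subtype, Fintype.card_subtype]
    exact_mod_cast h3
  let e : ∀ r, {j // ρ i' j = r} ≃ {j // ρ i j = r} := fun r =>
    Fintype.equivOfCardEq (hcard r)
  refine ⟨((Equiv.sigmaFiberEquiv (ρ i')).symm.trans (Equiv.sigmaCongrRight e)).trans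
    (Equiv.sigmaFiberEquiv (ρ i)), fun j => ?_⟩
  exact ((e (ρ i' j)) ⟨j, rfl⟩).2.symm
end

section
/- Fix D ∈ (0, D_max). A probability mass function Q* on A achieves the infimum defining R(D), i.e., R(P,Q*,D) = R(D), if and only if there exists λ* < 0 such that all of the following hold: (a) Λ'_{P,Q*}(λ*) = D; (b) defining W(a_i, a_j) := P_i · Q*(a_j) · e^{λ* ρ_ij} / Σ_{j'} Q*(a_{j'}) e^{λ* ρ_{ij'}}, one has Σ_i W(a_i, a_j) = Q*(a_j) for every j; and (c) whenever Q*(a_j) = 0, Σ_i P_i · e^{λ* ρ_ij} / Σ_{j'} Q*(a_{j'}) e^{λ* ρ_{ij'}} ≤ 1. -/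
open Real Finset

/-- Pointwise tangent inequality. -/
lemma aux_tangent (w q t : ℝ) (hw : 0 ≤ w) (hq : 0 ≤ q) (h : 0 < w → 0 < q) (ht : 0 < t) :
    w * Real.log t + w - t * q ≤ w * Real.log (w / q) := by
  rcases hw.eq_or_lt with h0 | h0
  · subst h0
    have := mul_nonneg ht.le hq
    simp only [zero_mul]; linarith
  · have hq' := h h0
    have h1 : Real.log (t * q / w) ≤ t * q / w - 1 := Real.log_le_sub_one_of_pos (by positivity)
    have h2 : Real.log (t * q / w) = Real.log t - Real.log (w / q) := by
      rw [Real.log_div (by positivity) (by positivity), Real.log_mul (by positivity) (by positivity),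
        Real.log_div (by positivity) (by positivity)]
      ring
    rw [h2] at h1
    have h3 := mul_le_mul_of_nonneg_left h1 hw
    have h4 : w * (t * q / w - 1) = t * q - w := by field_simp
    rw [h4] at h3
    linarith

/-- Feasible transition matrices. -/
def auxFeas {k : ℕ} (P : Fin k → ℝ) (ρ : Fin k → Fin k → ℝ) (D : ℝ)
    (W : Fin k → Fin k → ℝ) : Prop :=
  (∀ i j, 0 ≤ W i j) ∧ (∀ i, ∑ j, W i j = 1) ∧ ∑ i, ∑ j, P i * W i j * ρ i j ≤ D

/-- Cost in nats. -/
noncomputable def auxCost {k : ℕ} (P Q : Fin k → ℝ) (W : Fin k → Fin k → ℝ) : ℝ :=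
  ∑ i, P i * ∑ j, W i j * Real.log (W i j / Q j)

lemma aux_cost_eq {k : ℕ} (P Q : Fin k → ℝ) (W : Fin k → Fin k → ℝ) :
    ∑ i, ∑ j, P i * W i j * Real.logb 2 (W i j / Q j) = auxCost P Q W / Real.log 2 := by
  unfold auxCost
  rw [Finset.sum_div]
  refine Finset.sum_congr rfl fun i _ => ?_
  rw [Finset.mul_sum, Finset.sum_div]
  refine Finset.sum_congr rfl fun j _ => ?_
  rw [Real.logb]; ring

lemma aux_Z_pos {k : ℕ} (Q : Fin k → ℝ) (hQ : IsPmf Q) (g : Fin k → ℝ) :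
    0 < ∑ j, Q j * Real.exp (g j) := by
  have h : 0 < ∑ j, Q j := by rw [hQ.2]; norm_num
  obtain ⟨j, hj, hj'⟩ := Finset.exists_lt_of_sum_lt (s := Finset.univ) (f := fun _ => (0:ℝ))
    (g := Q) (by simpa using h)
  exact Finset.sum_pos' (fun j _ => mul_nonneg (hQ.1 j) (Real.exp_pos _).le)
    ⟨j, hj, mul_pos hj' (Real.exp_pos _)⟩

lemma aux_lower {k : ℕ} (P : Fin k → ℝ) (ρ : Fin k → Fin k → ℝ) (hPpos : ∀ i, 0 < P i)
    (D : ℝ) (Q : Fin k → ℝ) (hQ : IsPmf Q) (W : Fin k → Fin k → ℝ) (hW : auxFeas P ρ D W)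
    (hs : ∀ i j, 0 < W i j → 0 < Q j) (l : ℝ) (hl : l ≤ 0) :
    l * D - Lam P ρ Q l ≤ auxCost P Q W := by
  obtain ⟨h0, h1, h2⟩ := hW
  have key : ∀ i, l * ∑ j, W i j * ρ i j - Real.log (∑ j, Q j * Real.exp (l * ρ i j))
      ≤ ∑ j, W i j * Real.log (W i j / Q j) := by
    intro i
    have hZ := aux_Z_pos Q hQ (fun j => l * ρ i j)
    set Z := ∑ j, Q j * Real.exp (l * ρ i j) with hZd
    have e : l * ∑ j, W i j * ρ i j - Real.log Z = ∑ j, (W i j * Real.log (Real.exp (l * ρ i j) / Z)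
        + W i j - Real.exp (l * ρ i j) / Z * Q j) := by
      have e1 : ∑ j, Real.exp (l * ρ i j) / Z * Q j = 1 := by
        rw [← div_self hZ.ne']
        nth_rewrite 2 [hZd]
        rw [Finset.sum_div]
        exact Finset.sum_congr rfl fun j _ => by ring
      have e2 : ∑ j, W i j * Real.log (Real.exp (l * ρ i j) / Z)
          = l * ∑ j, W i j * ρ i j - Real.log Z := by
        have : ∀ j, W i j * Real.log (Real.exp (l * ρ i j) / Z)
            = l * (W i j * ρ i j) - W i j * Real.log Z := by
          intro j
          rw [Real.log_div (Real.exp_pos _).ne' hZ.ne', Real.log_exp]; ring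
        simp_rw [this]
        rw [Finset.sum_sub_distrib, ← Finset.mul_sum, ← Finset.sum_mul, h1, one_mul]
      rw [Finset.sum_sub_distrib, Finset.sum_add_distrib, e1, e2, h1]; ring
    rw [e]
    exact Finset.sum_le_sum fun j _ => aux_tangent _ _ _ (h0 i j) (hQ.1 j) (hs i j) (by positivity)
  have h3 : ∑ i, P i * (l * ∑ j, W i j * ρ i j - Real.log (∑ j, Q j * Real.exp (l * ρ i j)))
      ≤ auxCost P Q W :=
    Finset.sum_le_sum fun i _ => mul_le_mul_of_nonneg_left (key i) (hPpos i).le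
  have h4 : ∑ i, P i * (l * ∑ j, W i j * ρ i j - Real.log (∑ j, Q j * Real.exp (l * ρ i j)))
      = l * (∑ i, ∑ j, P i * W i j * ρ i j) - Lam P ρ Q l := by
    unfold Lam
    rw [Finset.mul_sum, ← Finset.sum_sub_distrib]
    refine Finset.sum_congr rfl fun i _ => ?_
    rw [mul_sub]
    congr 1
    simp_rw [mul_assoc]
    rw [← Finset.mul_sum]; ring
  have := mul_le_mul_of_nonpos_left h2 hl
  linarith

lemma aux_hasDeriv {k : ℕ} (P : Fin k → ℝ) (ρ : Fin k → Fin k → ℝ) (Q : Fin k → ℝ)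
    (hQ : IsPmf Q) (l : ℝ) :
    HasDerivAt (Lam P ρ Q) (∑ i, P i * ((∑ j, Q j * (Real.exp (l * ρ i j) * ρ i j)) /
      (∑ j, Q j * Real.exp (l * ρ i j)))) l := by
  unfold Lam
  refine HasDerivAt.fun_sum fun i _ => ?_
  refine HasDerivAt.const_mul _ ?_
  refine HasDerivAt.log ?_ (aux_Z_pos Q hQ _).ne'
  refine HasDerivAt.fun_sum fun j _ => ?_
  refine HasDerivAt.const_mul _ ?_
  have h : HasDerivAt (fun x : ℝ => x * ρ i j) (ρ i j) l := by
    simpa using (hasDerivAt_id l).mul_const (ρ i j)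
  exact h.exp

/-- The tilted matrix. -/
noncomputable def auxTilt {k : ℕ} (ρ : Fin k → Fin k → ℝ) (Q : Fin k → ℝ) (l : ℝ)
    (i j : Fin k) : ℝ :=
  Q j * Real.exp (l * ρ i j) / ∑ j', Q j' * Real.exp (l * ρ i j')

lemma aux_tilt_nonneg {k : ℕ} (ρ : Fin k → Fin k → ℝ) (Q : Fin k → ℝ) (hQ : IsPmf Q) (l : ℝ)
    (i j : Fin k) : 0 ≤ auxTilt ρ Q l i j :=
  div_nonneg (mul_nonneg (hQ.1 j) (Real.exp_pos _).le) (aux_Z_pos Q hQ _).le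

lemma aux_tilt_sum {k : ℕ} (ρ : Fin k → Fin k → ℝ) (Q : Fin k → ℝ) (hQ : IsPmf Q) (l : ℝ)
    (i : Fin k) : ∑ j, auxTilt ρ Q l i j = 1 := by
  unfold auxTilt
  rw [← Finset.sum_div]
  exact div_self (aux_Z_pos Q hQ _).ne'

lemma aux_tilt_supp {k : ℕ} (ρ : Fin k → Fin k → ℝ) (Q : Fin k → ℝ) (hQ : IsPmf Q) (l : ℝ)
    (i j : Fin k) (h : 0 < auxTilt ρ Q l i j) : 0 < Q j := by
  rcases (hQ.1 j).eq_or_lt with h0 | h0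
  · simp [auxTilt, ← h0] at h
  · exact h0

lemma aux_tilt_cost {k : ℕ} (P : Fin k → ℝ) (ρ : Fin k → Fin k → ℝ) (Q : Fin k → ℝ)
    (hQ : IsPmf Q) (l : ℝ) :
    auxCost P Q (auxTilt ρ Q l) =
      l * (∑ i, ∑ j, P i * auxTilt ρ Q l i j * ρ i j) - Lam P ρ Q l := by
  unfold auxCost Lam
  rw [Finset.mul_sum, ← Finset.sum_sub_distrib]
  refine Finset.sum_congr rfl fun i _ => ?_
  have hZ := aux_Z_pos Q hQ (fun j => l * ρ i j)
  have h1 : ∀ j, auxTilt ρ Q l i j * Real.log (auxTilt ρ Q l i j / Q j) =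
      l * (auxTilt ρ Q l i j * ρ i j) -
        auxTilt ρ Q l i j * Real.log (∑ j', Q j' * Real.exp (l * ρ i j')) := by
    intro j
    rcases (hQ.1 j).eq_or_lt with h0 | h0
    · simp [auxTilt, ← h0]
    · have : auxTilt ρ Q l i j / Q j =
          Real.exp (l * ρ i j) / (∑ j', Q j' * Real.exp (l * ρ i j')) := by
        unfold auxTilt; field_simp
      rw [this, Real.log_div (Real.exp_pos _).ne' hZ.ne', Real.log_exp]; ring
  simp_rw [h1]
  rw [Finset.sum_sub_distrib, ← Finset.mul_sum, ← Finset.sum_mul, aux_tilt_sum ρ Q hQ, one_mul,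
    mul_sub]
  congr 1
  simp_rw [mul_assoc]
  rw [← Finset.mul_sum]; ring

lemma aux_tilt_dist {k : ℕ} (P : Fin k → ℝ) (ρ : Fin k → Fin k → ℝ) (Q : Fin k → ℝ) (l : ℝ) :
    ∑ i, ∑ j, P i * auxTilt ρ Q l i j * ρ i j =
    ∑ i, P i * ((∑ j, Q j * (Real.exp (l * ρ i j) * ρ i j)) /
      (∑ j, Q j * Real.exp (l * ρ i j))) := by
  refine Finset.sum_congr rfl fun i _ => ?_
  rw [Finset.sum_div, Finset.mul_sum]
  refine Finset.sum_congr rfl fun j _ => ?_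
  unfold auxTilt; ring

lemma aux_RPQ_le {k : ℕ} (P : Fin k → ℝ) (ρ : Fin k → Fin k → ℝ) (D : ℝ)
    (Q : Fin k → ℝ) (W : Fin k → Fin k → ℝ) (hW : auxFeas P ρ D W)
    (hs : ∀ i j, 0 < W i j → 0 < Q j) :
    RPQ P ρ Q D ≤ ((auxCost P Q W / Real.log 2 : ℝ) : EReal) := by
  unfold RPQ
  refine iInf₂_le_of_le W hW ?_
  unfold wCost
  rw [if_pos hs, aux_cost_eq]

lemma aux_le_RPQ {k : ℕ} (P : Fin k → ℝ) (ρ : Fin k → Fin k → ℝ) (D m : ℝ)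
    (Q : Fin k → ℝ) (h : ∀ W, auxFeas P ρ D W → (∀ i j, 0 < W i j → 0 < Q j) →
      m ≤ auxCost P Q W) :
    ((m / Real.log 2 : ℝ) : EReal) ≤ RPQ P ρ Q D := by
  unfold RPQ
  refine le_iInf₂ fun W hW => ?_
  unfold wCost
  split_ifs with hs
  · rw [aux_cost_eq]
    exact EReal.coe_le_coe_iff.2 (div_le_div_of_nonneg_right (h W hW hs)
      (Real.log_nonneg (by norm_num)))
  · exact le_top

/-- One-sided maximum gives a nonpositive derivative. -/
lemma aux_oneside (h : ℝ → ℝ) (h' : ℝ) (hd : HasDerivAt h h' 0)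
    (hm : ∀ e, 0 ≤ e → e ≤ 1 → h e ≤ h 0) : h' ≤ 0 := by
  have h1 := (hasDerivAt_iff_tendsto_slope.1 hd)
  have h2 : Filter.Tendsto (slope h 0) (nhdsWithin 0 (Set.Ioi 0)) (nhds h') :=
    h1.mono_left (nhdsWithin_mono _ (fun x hx => ne_of_gt hx))
  refine le_of_tendsto h2 ?_
  filter_upwards [Ioc_mem_nhdsGT (show (0:ℝ) < 1 by norm_num)] with x hx
  rw [slope_def_field]
  exact div_nonpos_of_nonpos_of_nonneg (by linarith [hm x hx.1.le hx.2]) (by linarith [hx.1])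

/-- Attainable costs at level `x`. -/
def auxS {k : ℕ} (P : Fin k → ℝ) (ρ : Fin k → Fin k → ℝ) (x : ℝ) : Set ℝ :=
  {c | ∃ Q W, IsPmf Q ∧ auxFeas P ρ x W ∧ (∀ i j, 0 < W i j → 0 < Q j) ∧ c = auxCost P Q W}

lemma aux_S_nonneg {k : ℕ} (P : Fin k → ℝ) (ρ : Fin k → Fin k → ℝ) (hPpos : ∀ i, 0 < P i)
    (x c : ℝ) (hc : c ∈ auxS P ρ x) : 0 ≤ c := by
  obtain ⟨Q, W, hQ, hW, hs, rfl⟩ := hc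
  have := aux_lower P ρ hPpos x Q hQ W hW hs 0 le_rfl
  simpa [Lam, hQ.2] using this

lemma aux_S_nonempty {k : ℕ} (P : Fin k → ℝ) (ρ : Fin k → Fin k → ℝ) (hP : IsPmf P)
    (hPpos : ∀ i, 0 < P i) (hρzero : ∀ i j, ρ i j = 0 ↔ i = j) (x : ℝ) (hx : 0 ≤ x) :
    (auxS P ρ x).Nonempty := by
  refine ⟨_, P, fun i j => if i = j then 1 else 0, hP, ⟨?_, ?_, ?_⟩, fun i j _ => hPpos j, rfl⟩
  · intro i j; dsimp only; split_ifs <;> norm_num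
  · intro i; simp
  · have : ∀ i, ρ i i = 0 := fun i => (hρzero i i).2 rfl
    simpa [this] using hx

lemma aux_S_conv {k : ℕ} (P : Fin k → ℝ) (ρ : Fin k → Fin k → ℝ) (hPpos : ∀ i, 0 < P i)
    (x y a b c d : ℝ) (ha : 0 ≤ a) (hb : 0 ≤ b) (hab : a + b = 1)
    (hc : c ∈ auxS P ρ x) (hd : d ∈ auxS P ρ y) :
    ∃ e ∈ auxS P ρ (a * x + b * y), e ≤ a * c + b * d := by
  rcases ha.eq_or_lt with h0 | ha
  · subst h0
    obtain rfl : b = 1 := by linarith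
    exact ⟨d, by simpa using hd, by simp⟩
  rcases hb.eq_or_lt with h0 | hb
  · subst h0
    obtain rfl : a = 1 := by linarith
    exact ⟨c, by simpa using hc, by simp⟩
  obtain ⟨Q, W, hQ, hW, hs, rfl⟩ := hc
  obtain ⟨Q', W', hQ', hW', hs', rfl⟩ := hd
  have hnn : ∀ i j, 0 ≤ a * W i j + b * W' i j := fun i j =>
    add_nonneg (mul_nonneg ha.le (hW.1 i j)) (mul_nonneg hb.le (hW'.1 i j))
  have hsupp : ∀ i j, 0 < a * W i j + b * W' i j → 0 < a * Q j + b * Q' j := by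
    intro i j h
    have q0 := mul_nonneg ha.le (hQ.1 j)
    have q0' := mul_nonneg hb.le (hQ'.1 j)
    rcases (hW.1 i j).eq_or_lt with h1 | h1
    · rcases (hW'.1 i j).eq_or_lt with h2 | h2
      · rw [← h1, ← h2] at h; simp at h
      · have := mul_pos hb (hs' i j h2); linarith
    · have := mul_pos ha (hs i j h1); linarith
  refine ⟨_, ⟨fun j => a * Q j + b * Q' j, fun i j => a * W i j + b * W' i j, ⟨?_, ?_⟩,
    ⟨hnn, ?_, ?_⟩, hsupp, rfl⟩, ?_⟩
  · intro j
    exact add_nonneg (mul_nonneg ha.le (hQ.1 j)) (mul_nonneg hb.le (hQ'.1 j))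
  · rw [Finset.sum_add_distrib, ← Finset.mul_sum, ← Finset.mul_sum, hQ.2, hQ'.2]; linarith
  · intro i
    rw [Finset.sum_add_distrib, ← Finset.mul_sum, ← Finset.mul_sum, hW.2.1, hW'.2.1]; linarith
  · have : ∑ i, ∑ j, P i * (a * W i j + b * W' i j) * ρ i j =
        a * (∑ i, ∑ j, P i * W i j * ρ i j) + b * (∑ i, ∑ j, P i * W' i j * ρ i j) := by
      simp_rw [Finset.mul_sum, ← Finset.sum_add_distrib]
      refine Finset.sum_congr rfl fun i _ => Finset.sum_congr rfl fun j _ => by ring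
    rw [this]
    exact add_le_add (mul_le_mul_of_nonneg_left hW.2.2 ha.le)
      (mul_le_mul_of_nonneg_left hW'.2.2 hb.le)
  · unfold auxCost
    rw [Finset.mul_sum, Finset.mul_sum, ← Finset.sum_add_distrib]
    refine Finset.sum_le_sum fun i _ => ?_
    have : a * (P i * ∑ j, W i j * Real.log (W i j / Q j)) +
        b * (P i * ∑ j, W' i j * Real.log (W' i j / Q' j)) =
        P i * ∑ j, (a * (W i j * Real.log (W i j / Q j)) +
          b * (W' i j * Real.log (W' i j / Q' j))) := by
      rw [Finset.sum_add_distrib, ← Finset.mul_sum, ← Finset.mul_sum]; ring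
    rw [this]
    refine mul_le_mul_of_nonneg_left (Finset.sum_le_sum fun j _ => ?_) (hPpos i).le
    rcases (hnn i j).eq_or_lt with h0 | h0
    · have w1 := hW.1 i j
      have w2 := hW'.1 i j
      have z1 := mul_nonneg ha.le w1
      have z2 := mul_nonneg hb.le w2
      have e1 : a * W i j = 0 := by linarith
      have e2 : b * W' i j = 0 := by linarith
      have f1 : W i j = 0 := by simpa [ha.ne'] using e1
      have f2 : W' i j = 0 := by simpa [hb.ne'] using e2
      simp [f1, f2]
    · have hq := hsupp i j h0
      set t := (a * W i j + b * W' i j) / (a * Q j + b * Q' j) with ht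
      have htp : 0 < t := div_pos h0 hq
      have t1 := aux_tangent (W i j) (Q j) t (hW.1 i j) (hQ.1 j) (hs i j) htp
      have t2 := aux_tangent (W' i j) (Q' j) t (hW'.1 i j) (hQ'.1 j) (hs' i j) htp
      have t3 := mul_le_mul_of_nonneg_left t1 ha.le
      have t4 := mul_le_mul_of_nonneg_left t2 hb.le
      have t5 : t * (a * Q j + b * Q' j) = a * W i j + b * W' i j := div_mul_cancel₀ _ hq.ne'
      nlinarith

/-- Supporting line for a convex function (stated by hand). -/
lemma aux_subgrad (f : ℝ → ℝ) (D : ℝ) (hD : 0 < D)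
    (hf : ∀ x y a b, 0 ≤ x → 0 ≤ y → 0 ≤ a → 0 ≤ b → a + b = 1 →
      f (a * x + b * y) ≤ a * f x + b * f y) :
    ∃ l : ℝ, ∀ x, 0 ≤ x → f D + l * (x - D) ≤ f x := by
  have key : ∀ x y, 0 ≤ x → x < D → D < y → (f D - f x) / (D - x) ≤ (f y - f D) / (y - D) := by
    intro x y hx hxD hDy
    have h1 : 0 < D - x := by linarith
    have h2 : 0 < y - D := by linarith
    have h3 : 0 < y - x := by linarith
    have := hf x y ((y - D) / (y - x)) ((D - x) / (y - x)) hx (by linarith) (by positivity)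
      (by positivity) (by field_simp; ring)
    have e : (y - D) / (y - x) * x + (D - x) / (y - x) * y = D := by field_simp; ring
    rw [e] at this
    have h4 := mul_le_mul_of_nonneg_right this h3.le
    have e2 : ((y - D) / (y - x) * f x + (D - x) / (y - x) * f y) * (y - x) =
      (y - D) * f x + (D - x) * f y := by field_simp
    rw [e2] at h4
    rw [div_le_div_iff₀ h1 h2]
    nlinarith
  set T : Set ℝ := (fun x => (f D - f x) / (D - x)) '' Set.Ico 0 D with hT
  have hbd : ∀ y, D < y → ∀ t ∈ T, t ≤ (f y - f D) / (y - D) := by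
    rintro y hy t ⟨x, hx, rfl⟩
    exact key x y hx.1 hx.2 hy
  have hne : T.Nonempty := ⟨_, 0, ⟨le_rfl, hD⟩, rfl⟩
  refine ⟨sSup T, fun x hx => ?_⟩
  rcases lt_trichotomy x D with h | h | h
  · have h1 : (f D - f x) / (D - x) ≤ sSup T :=
      le_csSup ⟨_, hbd (D + 1) (by linarith)⟩ ⟨x, ⟨hx, h⟩, rfl⟩
    rw [div_le_iff₀ (by linarith)] at h1
    nlinarith
  · subst h; simp
  · have h1 : sSup T ≤ (f x - f D) / (x - D) := csSup_le hne (hbd x h)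
    rw [le_div_iff₀ (by linarith)] at h1
    linarith

/-- **Lemma 3.** A pmf `Q*` achieves the infimum defining `R(D)` if and only if there
is `λ* < 0` such that (a) `Λ'_{P,Q*}(λ*) = D`; (b) the second marginal of
`W(a_i,a_j) = P_i Q*_j e^{λ* ρ_ij} / Σ_{j'} Q*_{j'} e^{λ* ρ_{ij'}}` is `Q*`; and
(c) `Σ_i P_i e^{λ* ρ_ij} / Σ_{j'} Q*_{j'} e^{λ* ρ_{ij'}} ≤ 1` whenever `Q*_j = 0`. -/
theorem stmt_17 {k : ℕ} (hk : 2 ≤ k)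
    (P : Fin k → ℝ) (ρ : Fin k → Fin k → ℝ)
    (hP : IsPmf P) (hPpos : ∀ i, 0 < P i)
    (hρnn : ∀ i j, 0 ≤ ρ i j) (hρsym : ∀ i j, ρ i j = ρ j i)
    (hρzero : ∀ i j, ρ i j = 0 ↔ i = j)
    (hDmax : 0 < Dmax P ρ)
    (D : ℝ) (hD : D ∈ Set.Ioo 0 (Dmax P ρ))
    (Q : Fin k → ℝ) (hQ : IsPmf Q) :
    RPQ P ρ Q D = RofD P ρ D ↔
      ∃ l : ℝ, l < 0 ∧
        HasDerivAt (Lam P ρ Q) D l ∧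
        (∀ j, ∑ i, (P i * Q j * Real.exp (l * ρ i j)) /
            (∑ j', Q j' * Real.exp (l * ρ i j')) = Q j) ∧
        (∀ j, Q j = 0 → ∑ i, (P i * Real.exp (l * ρ i j)) /
            (∑ j', Q j' * Real.exp (l * ρ i j')) ≤ 1) := by
  have hlog2 : 0 < Real.log 2 := Real.log_pos (by norm_num)
  have hZ : ∀ (Q' : Fin k → ℝ), IsPmf Q' → ∀ l i, 0 < ∑ j, Q' j * Real.exp (l * ρ i j) :=
    fun Q' hQ' l i => aux_Z_pos Q' hQ' _
  have hRle : ∀ Q', IsPmf Q' → RofD P ρ D ≤ RPQ P ρ Q' D := fun Q' hQ' => iInf₂_le Q' hQ'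
  have hb : ∀ l j, ∑ i, (P i * Q j * Real.exp (l * ρ i j)) /
      (∑ j', Q j' * Real.exp (l * ρ i j')) = Q j * ∑ i, (P i * Real.exp (l * ρ i j)) /
            (∑ j', Q j' * Real.exp (l * ρ i j')) := by
    intro l j
    rw [Finset.mul_sum]
    exact Finset.sum_congr rfl fun i _ => by ring
  constructor
  · intro hR
    -- the real-valued rate-distortion function in nats
    set f : ℝ → ℝ := fun x => sInf (auxS P ρ x) with hf
    have hbdd : ∀ x, BddBelow (auxS P ρ x) := fun x => ⟨0, aux_S_nonneg P ρ hPpos x⟩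
    have hnon := aux_S_nonempty P ρ hP hPpos hρzero
    have hconv : ∀ x y a b, 0 ≤ x → 0 ≤ y → 0 ≤ a → 0 ≤ b → a + b = 1 →
        f (a * x + b * y) ≤ a * f x + b * f y := by
      intro x y a b hx hy ha hb hab
      refine le_of_forall_pos_le_add fun ε hε => ?_
      obtain ⟨c, hc, hc'⟩ := exists_lt_of_csInf_lt (hnon x hx) (lt_add_of_pos_right (f x) hε)
      obtain ⟨d, hd, hd'⟩ := exists_lt_of_csInf_lt (hnon y hy) (lt_add_of_pos_right (f y) hε)
      obtain ⟨e, he, he'⟩ := aux_S_conv P ρ hPpos x y a b c d ha hb hab hc hd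
      have h1 : f (a * x + b * y) ≤ e := csInf_le (hbdd _) he
      have h2 := mul_le_mul_of_nonneg_left hc'.le ha
      have h3 := mul_le_mul_of_nonneg_left hd'.le hb
      have h4 : a * ε + b * ε = ε := by rw [← add_mul, hab, one_mul]
      linarith
    obtain ⟨l, hl⟩ := aux_subgrad f D hD.1 hconv
    -- the dual bound at `Q`
    have hup : ∀ l', l' ≤ 0 → l' * D - Lam P ρ Q l' ≤ f D := by
      intro l' hl'
      refine le_csInf (hnon D hD.1.le) ?_
      rintro c ⟨Q', W, hQ', hW, hs, rfl⟩
      have h1 := aux_le_RPQ P ρ D (l' * D - Lam P ρ Q l') Q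
        (fun W hW hs => aux_lower P ρ hPpos D Q hQ W hW hs l' hl')
      rw [hR] at h1
      have h2 := (h1.trans (hRle Q' hQ')).trans (aux_RPQ_le P ρ D Q' W hW hs)
      rw [EReal.coe_le_coe_iff] at h2
      exact (div_le_div_iff_of_pos_right hlog2).1 h2
    -- some column attains Dmax
    have hDle : ∀ j, Dmax P ρ ≤ ∑ i, P i * ρ i j := fun j =>
      csInf_le (Set.finite_range _).bddBelow ⟨j, rfl⟩
    haveI : Nonempty (Fin k) := ⟨⟨0, by omega⟩⟩
    obtain ⟨j0, hj0⟩ : ∃ j, ∑ i, P i * ρ i j = Dmax P ρ :=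
      (Set.range_nonempty (fun j => ∑ i, P i * ρ i j)).csInf_mem (Set.finite_range _)
    have hfmax : f (Dmax P ρ) ≤ 0 := by
      refine csInf_le (hbdd _) ⟨fun j => if j = j0 then 1 else 0, fun i j => if j = j0 then 1 else 0,
        ⟨?_, ?_⟩, ⟨?_, ?_, ?_⟩, ?_, ?_⟩
      · intro j; dsimp only; split_ifs <;> norm_num
      · simp
      · intro i j; dsimp only; split_ifs <;> norm_num
      · intro i; simp
      · simp [hj0]
      · intro i j h; exact h
      · simp [auxCost]
    have hfpos : 0 < f D := by
      by_contra hcon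
      push Not at hcon
      have hder := aux_hasDeriv P ρ Q hQ 0
      have hd2 : HasDerivAt (fun e : ℝ => (-e) * D - Lam P ρ Q (-e))
          (-D + ∑ i, P i * ((∑ j, Q j * (Real.exp (0 * ρ i j) * ρ i j)) /
            (∑ j, Q j * Real.exp (0 * ρ i j)))) 0 := by
        have hder' : HasDerivAt (Lam P ρ Q) (∑ i, P i * ((∑ j, Q j * (Real.exp (0 * ρ i j) * ρ i j)) /
            (∑ j, Q j * Real.exp (0 * ρ i j)))) (-(0:ℝ)) := by simpa using hder
        have h1 := hder'.comp (0:ℝ) (hasDerivAt_neg (0:ℝ))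
        have h2 := (hasDerivAt_neg (0:ℝ)).mul_const D
        refine (h2.sub h1).congr_deriv ?_
        ring
      have h0 : Lam P ρ Q 0 = 0 := by simp [Lam, hQ.2]
      have := aux_oneside _ _ hd2 (by
        intro e he _
        have := hup (-e) (by linarith)
        simp only [neg_zero, zero_mul, h0]
        linarith)
      simp only [zero_mul, Real.exp_zero, mul_one, one_mul, hQ.2, div_one] at this
      have h3 : ∑ i, P i * ∑ j, Q j * ρ i j = ∑ j, Q j * ∑ i, P i * ρ i j := by
        simp_rw [Finset.mul_sum]
        rw [Finset.sum_comm]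
        exact Finset.sum_congr rfl fun i _ => Finset.sum_congr rfl fun j _ => by ring
      have h4 : Dmax P ρ ≤ ∑ j, Q j * ∑ i, P i * ρ i j := by
        calc Dmax P ρ = ∑ j, Q j * Dmax P ρ := by rw [← Finset.sum_mul, hQ.2, one_mul]
          _ ≤ _ := Finset.sum_le_sum fun j _ => mul_le_mul_of_nonneg_left (hDle j) (hQ.1 j)
      have := hD.2
      linarith
    have hl0 : l < 0 := by
      have h1 := hl (Dmax P ρ) hDmax.le
      have h2 := hD.2
      by_contra hcon
      push Not at hcon
      have := mul_nonneg hcon (sub_nonneg.2 h2.le)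
      linarith
    -- dual optimality
    have hdual : ∀ Q', IsPmf Q' → f D ≤ l * D - Lam P ρ Q' l := by
      intro Q' hQ'
      have h1 : (0:ℝ) ≤ ∑ i, ∑ j, P i * auxTilt ρ Q' l i j * ρ i j :=
        Finset.sum_nonneg fun i _ => Finset.sum_nonneg fun j _ =>
          mul_nonneg (mul_nonneg (hPpos i).le (aux_tilt_nonneg ρ Q' hQ' l i j)) (hρnn i j)
      have h2 := hl _ h1
      have h3 : f (∑ i, ∑ j, P i * auxTilt ρ Q' l i j * ρ i j) ≤ auxCost P Q' (auxTilt ρ Q' l) :=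
        csInf_le (hbdd _) ⟨Q', auxTilt ρ Q' l, hQ', ⟨aux_tilt_nonneg ρ Q' hQ' l,
          aux_tilt_sum ρ Q' hQ' l, le_rfl⟩, aux_tilt_supp ρ Q' hQ' l, rfl⟩
      rw [aux_tilt_cost P ρ Q' hQ'] at h3
      linarith
    have hc : ∀ j, ∑ i, (P i * Real.exp (l * ρ i j)) /
            (∑ j', Q j' * Real.exp (l * ρ i j')) ≤ 1 := by
      intro j
      have hd : HasDerivAt (fun e : ℝ => ∑ i, P i * Real.log
          ((∑ j', Q j' * Real.exp (l * ρ i j')) +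
            e * (Real.exp (l * ρ i j) - ∑ j', Q j' * Real.exp (l * ρ i j'))))
          (∑ i, P i * ((Real.exp (l * ρ i j) - ∑ j', Q j' * Real.exp (l * ρ i j')) /
            (∑ j', Q j' * Real.exp (l * ρ i j')))) 0 := by
        refine HasDerivAt.fun_sum fun i _ => HasDerivAt.const_mul _ ?_
        have h1 := (((hasDerivAt_id (0:ℝ)).mul_const
          (Real.exp (l * ρ i j) - ∑ j', Q j' * Real.exp (l * ρ i j'))).const_add
          (∑ j', Q j' * Real.exp (l * ρ i j'))).log (by simpa using (hZ Q hQ l i).ne')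
        simpa using h1
      have h1 := aux_oneside _ _ hd (by
        intro e he he1
        have hpm : IsPmf (fun j' => (1 - e) * Q j' + e * (if j' = j then 1 else 0)) := by
          refine ⟨fun j' => ?_, ?_⟩
          · have := mul_nonneg (sub_nonneg.2 he1) (hQ.1 j')
            dsimp only
            split_ifs <;> linarith
          · rw [Finset.sum_add_distrib, ← Finset.mul_sum, ← Finset.mul_sum, hQ.2]; simp
        have h2 := hdual _ hpm
        have h3 := hup l hl0.le
        have h4 : Lam P ρ (fun j' => (1 - e) * Q j' + e * (if j' = j then 1 else 0)) l =
            ∑ i, P i * Real.log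
          ((∑ j', Q j' * Real.exp (l * ρ i j')) +
            e * (Real.exp (l * ρ i j) - ∑ j', Q j' * Real.exp (l * ρ i j'))) := by
          unfold Lam
          refine Finset.sum_congr rfl fun i _ => ?_
          congr 2
          simp_rw [add_mul, mul_assoc]
          rw [Finset.sum_add_distrib, ← Finset.mul_sum, ← Finset.mul_sum]
          simp only [ite_mul, one_mul, zero_mul, Finset.sum_ite_eq', Finset.mem_univ, if_true]
          ring
        have h5 : Lam P ρ Q l = ∑ i, P i * Real.log
          ((∑ j', Q j' * Real.exp (l * ρ i j')) +
            0 * (Real.exp (l * ρ i j) - ∑ j', Q j' * Real.exp (l * ρ i j'))) := by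
          simp [Lam]
        rw [← h4, ← h5]
        linarith)
      have h2 : ∑ i, P i * ((Real.exp (l * ρ i j) - ∑ j', Q j' * Real.exp (l * ρ i j')) /
            (∑ j', Q j' * Real.exp (l * ρ i j'))) = (∑ i, (P i * Real.exp (l * ρ i j)) /
            (∑ j', Q j' * Real.exp (l * ρ i j'))) - 1 := by
        rw [← hP.2, ← Finset.sum_sub_distrib]
        refine Finset.sum_congr rfl fun i _ => ?_
        have := (hZ Q hQ l i).ne'
        field_simp
      linarith
    refine ⟨l, hl0, ?_, ?_, fun j _ => hc j⟩
    · have hder := aux_hasDeriv P ρ Q hQ l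
      have hmax : IsLocalMax (fun l' => l' * D - Lam P ρ Q l') l := by
        filter_upwards [Iio_mem_nhds hl0] with l' hl'
        exact (hup l' (le_of_lt hl')).trans (hdual Q hQ)
      have h1 : HasDerivAt (fun l' => l' * D - Lam P ρ Q l') _ l :=
        ((hasDerivAt_id l).mul_const D).sub hder
      have h2 := hmax.hasDerivAt_eq_zero h1
      rw [one_mul, sub_eq_zero] at h2
      rw [h2]; exact hder
    · have hsum : ∑ j, Q j * ∑ i, (P i * Real.exp (l * ρ i j)) /
            (∑ j', Q j' * Real.exp (l * ρ i j')) = 1 := by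
        simp_rw [← hb]
        rw [Finset.sum_comm, ← hP.2]
        refine Finset.sum_congr rfl fun i _ => ?_
        have h1 := aux_tilt_sum ρ Q hQ l i
        calc _ = ∑ j, P i * auxTilt ρ Q l i j :=
              Finset.sum_congr rfl fun j _ => by unfold auxTilt; ring
          _ = P i := by rw [← Finset.mul_sum, h1, mul_one]
      have hle : ∀ j ∈ Finset.univ, Q j * ∑ i, (P i * Real.exp (l * ρ i j)) /
            (∑ j', Q j' * Real.exp (l * ρ i j')) ≤ Q j := fun j _ => by
        simpa using mul_le_mul_of_nonneg_left (hc j) (hQ.1 j)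
      intro j
      rw [hb]
      exact (Finset.sum_eq_sum_iff_of_le hle).1 (hsum.trans hQ.2.symm) j (Finset.mem_univ j)
  · rintro ⟨l, hl0, ha, hbb, hcc⟩
    have hdist : ∑ i, ∑ j, P i * auxTilt ρ Q l i j * ρ i j = D := by
      rw [aux_tilt_dist]
      exact (aux_hasDeriv P ρ Q hQ l).unique ha
    have hub := aux_RPQ_le P ρ D Q (auxTilt ρ Q l) ⟨aux_tilt_nonneg ρ Q hQ l,
      aux_tilt_sum ρ Q hQ l, hdist.le⟩ (aux_tilt_supp ρ Q hQ l)
    rw [aux_tilt_cost P ρ Q hQ, hdist] at hub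
    refine le_antisymm (hub.trans ?_) (hRle Q hQ)
    refine le_iInf₂ fun Q' hQ' => ?_
    refine aux_le_RPQ P ρ D _ Q' fun W hW hs => ?_
    refine le_trans ?_ (aux_lower P ρ hPpos D Q' hQ' W hW hs l hl0.le)
    have hc : ∀ j, ∑ i, (P i * Real.exp (l * ρ i j)) /
            (∑ j', Q j' * Real.exp (l * ρ i j')) ≤ 1 := by
      intro j
      rcases (hQ.1 j).eq_or_lt with h0 | h0
      · exact hcc j h0.symm
      · have h1 := hbb j
        rw [hb] at h1
        exact (mul_left_cancel₀ h0.ne' (h1.trans (mul_one _).symm)).le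
    have hmain : Lam P ρ Q' l - Lam P ρ Q l ≤ 0 := by
      unfold Lam
      rw [← Finset.sum_sub_distrib]
      have h1 : ∀ i ∈ Finset.univ, P i * Real.log (∑ j, Q' j * Real.exp (l * ρ i j)) -
          P i * Real.log (∑ j, Q j * Real.exp (l * ρ i j)) ≤
          (∑ j, Q' j * ((P i * Real.exp (l * ρ i j)) / ∑ j', Q j' * Real.exp (l * ρ i j'))) - P i := by
        intro i _
        have z := hZ Q hQ l i
        have z' := hZ Q' hQ' l i
        have h2 := Real.log_le_sub_one_of_pos (div_pos z' z)
        rw [Real.log_div z'.ne' z.ne'] at h2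
        have h3 := mul_le_mul_of_nonneg_left h2 (hPpos i).le
        have h4 : ∑ j, Q' j * ((P i * Real.exp (l * ρ i j)) / ∑ j', Q j' * Real.exp (l * ρ i j')) =
            P i * ((∑ j, Q' j * Real.exp (l * ρ i j)) / ∑ j', Q j' * Real.exp (l * ρ i j')) := by
          rw [Finset.sum_div, Finset.mul_sum]
          exact Finset.sum_congr rfl fun j _ => by ring
        rw [h4]
        linarith
      refine (Finset.sum_le_sum h1).trans ?_
      rw [Finset.sum_sub_distrib, hP.2, Finset.sum_comm]
      simp_rw [← Finset.mul_sum]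
      have : ∑ j, Q' j * ∑ i, (P i * Real.exp (l * ρ i j)) /
            (∑ j', Q j' * Real.exp (l * ρ i j')) ≤ ∑ j, Q' j :=
        Finset.sum_le_sum fun j _ => by
          simpa using mul_le_mul_of_nonneg_left (hc j) (hQ'.1 j)
      rw [hQ'.2] at this
      linarith
    linarith
end
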